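/- There exists a constant C > 0, depending only on L, η, β, κ, τ, m, δ and p (and independent of λ), such that every solution (u, w, θ, q) of the resolvent system with data (f₁, f₂, f₃, f₄) satisfies ∫₀ᴸ m(x) |w′(x)|² dx + τ ∫₀ᴸ |q(x)|² dx ≤ C ‖F‖ ‖U‖. -/

import Mathlib

open MeasureTheory Set intervalIntegral Complex

noncomputable section

/-- A (smooth) solution of the resolvent system `(iλ − 𝒜)U = F` with clamped/zero-flux
boundary conditions: the four ODEs on `(0, L)` together with
`u(0) = u(L) = 0`, `w(0) = w(L) = 0`, `q(0) = q(L) = 0`. -/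
def ResolventSol (L η β κ τ : ℝ) (m δ p : ℝ → ℝ) (lam : ℝ)
    (f₁ f₂ f₃ f₄ u w θ q : ℝ → ℂ) : Prop :=
  ContDiff ℝ (⊤ : ℕ∞) u ∧ ContDiff ℝ (⊤ : ℕ∞) w ∧ ContDiff ℝ (⊤ : ℕ∞) θ ∧ ContDiff ℝ (⊤ : ℕ∞) q ∧
  ContDiff ℝ (⊤ : ℕ∞) f₁ ∧ ContDiff ℝ (⊤ : ℕ∞) f₂ ∧ ContDiff ℝ (⊤ : ℕ∞) f₃ ∧ ContDiff ℝ (⊤ : ℕ∞) f₄ ∧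
  (∀ x ∈ Ioo (0 : ℝ) L,
    (Complex.I * (lam : ℂ) * u x - w x = f₁ x) ∧
    (Complex.I * (lam : ℂ) * (m x : ℂ) * w x
        - deriv (fun y => (p y : ℂ) * deriv u y + 2 * (δ y : ℂ) * deriv w y) x
        + (η : ℂ) * deriv θ x = (m x : ℂ) * f₂ x) ∧
    (Complex.I * (lam : ℂ) * θ x
        + deriv (fun y => (κ : ℂ) * q y + (η : ℂ) * w y) x = f₃ x) ∧
    (Complex.I * (lam : ℂ) * (τ : ℂ) * q x + (κ : ℂ) * deriv θ x + (β : ℂ) * q x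
        = (τ : ℂ) * f₄ x)) ∧
  u 0 = 0 ∧ u L = 0 ∧ w 0 = 0 ∧ w L = 0 ∧ q 0 = 0 ∧ q L = 0

/-- Squared phase-space norm of `U = (u, w, θ, q)`. -/
def normUsq (L τ : ℝ) (m p : ℝ → ℝ) (u w θ q : ℝ → ℂ) : ℝ :=
  (∫ x in (0 : ℝ)..L, p x * ‖deriv u x‖ ^ 2) + (∫ x in (0 : ℝ)..L, m x * ‖w x‖ ^ 2)
    + (∫ x in (0 : ℝ)..L, ‖θ x‖ ^ 2) + τ * ∫ x in (0 : ℝ)..L, ‖q x‖ ^ 2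

/-- Squared phase-space norm of the data `F = (f₁, f₂, f₃, f₄)`. -/
def normFsq (L τ : ℝ) (m p : ℝ → ℝ) (f₁ f₂ f₃ f₄ : ℝ → ℂ) : ℝ :=
  (∫ x in (0 : ℝ)..L, p x * ‖deriv f₁ x‖ ^ 2) + (∫ x in (0 : ℝ)..L, m x * ‖f₂ x‖ ^ 2)
    + (∫ x in (0 : ℝ)..L, ‖f₃ x‖ ^ 2) + τ * ∫ x in (0 : ℝ)..L, ‖f₄ x‖ ^ 2

/-!
Pair the equations, the first one differentiated, with `p u'`, `w`, `θ` and `q` and take real parts: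
the terms in `iλ` are skew and vanish, and what is left says that the energy flux has derivative
dissipation minus power. The flux vanishes at both ends, so the total dissipation
`∫ 2 δ |w'|² + β |q|²` equals the power `Re ⟨F, U⟩ ≤ ‖F‖ ‖U‖`. The constant is only needed to
dominate `m` by `2 δ` and `τ` by `β`, hence does not see `λ`.

The coefficients `p` and `δ` are differentiable only almost everywhere, and elsewhere `deriv` of
the stress may be the junk value `0`. The balance is therefore pointwise almost everywhere, and it
is integrated by the absolute continuity of the flux.
-/

open scoped InnerProductSpace

section CauchySchwarz

variable {α : Type*} [MeasurableSpace α] {μ : Measure α}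

lemma memLp_two_sqrt {a : α → ℝ} (ha₀ : 0 ≤ᵐ[μ] a) (ha : Integrable a μ) :
    MemLp (fun x => √(a x)) 2 μ := by
  have hmeas : AEStronglyMeasurable (fun x => √(a x)) μ :=
    ha.aestronglyMeasurable.aemeasurable.sqrt.aestronglyMeasurable
  refine (memLp_two_iff_integrable_sq hmeas).2 (ha.congr ?_)
  filter_upwards [ha₀] with x hx using (Real.sq_sqrt hx).symm

lemma integral_sqrt_mul_sqrt_le {a b : α → ℝ} (ha₀ : 0 ≤ᵐ[μ] a) (hb₀ : 0 ≤ᵐ[μ] b)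
    (ha : Integrable a μ) (hb : Integrable b μ) :
    ∫ x, √(a x) * √(b x) ∂μ ≤ √(∫ x, a x ∂μ) * √(∫ x, b x ∂μ) := by
  have integral_sq_sqrt {c : α → ℝ} (hc₀ : 0 ≤ᵐ[μ] c) :
      ∫ x, √(c x) ^ (2 : ℝ) ∂μ = ∫ x, c x ∂μ := by
    refine integral_congr_ae ?_
    filter_upwards [hc₀] with x hx
    rw [Real.rpow_two, Real.sq_sqrt hx]
  have hölder := integral_mul_le_Lp_mul_Lq_of_nonneg Real.HolderConjugate.two_two
    (.of_forall fun x => Real.sqrt_nonneg (a x)) (.of_forall fun x => Real.sqrt_nonneg (b x))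
    (by simpa using memLp_two_sqrt ha₀ ha) (by simpa using memLp_two_sqrt hb₀ hb)
  rwa [integral_sq_sqrt ha₀, integral_sq_sqrt hb₀, ← Real.sqrt_eq_rpow,
    ← Real.sqrt_eq_rpow] at hölder

lemma integral_mul_inner_le {E : Type*} [NormedAddCommGroup E] [InnerProductSpace ℝ E]
    {ω : α → ℝ} {f g : α → E} (hω : 0 ≤ᵐ[μ] ω)
    (hf : Integrable (fun x => ω x * ‖f x‖ ^ 2) μ) (hg : Integrable (fun x => ω x * ‖g x‖ ^ 2) μ) :
    ∫ x, ω x * ⟪f x, g x⟫_ℝ ∂μ ≤ √(∫ x, ω x * ‖f x‖ ^ 2 ∂μ) * √(∫ x, ω x * ‖g x‖ ^ 2 ∂μ) := by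
  have nonneg (h : α → E) : 0 ≤ᵐ[μ] fun x => ω x * ‖h x‖ ^ 2 := by
    filter_upwards [hω] with x hx using mul_nonneg hx (sq_nonneg _)
  have pointwise : ∀ᵐ x ∂μ,
      ‖ω x * ⟪f x, g x⟫_ℝ‖ ≤ √(ω x * ‖f x‖ ^ 2) * √(ω x * ‖g x‖ ^ 2) := by
    filter_upwards [hω] with x hx
    calc ‖ω x * ⟪f x, g x⟫_ℝ‖ = ω x * |⟪f x, g x⟫_ℝ| := by
          rw [norm_mul, Real.norm_of_nonneg hx, Real.norm_eq_abs]
      _ ≤ ω x * (‖f x‖ * ‖g x‖) := by gcongr; exact abs_real_inner_le_norm _ _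
      _ = √(ω x * ‖f x‖ ^ 2) * √(ω x * ‖g x‖ ^ 2) := by
          rw [Real.sqrt_mul hx, Real.sqrt_mul hx, Real.sqrt_sq (norm_nonneg _),
            Real.sqrt_sq (norm_nonneg _), mul_mul_mul_comm, Real.mul_self_sqrt hx]
  have hint := (memLp_two_sqrt (nonneg f) hf).integrable_mul (memLp_two_sqrt (nonneg g) hg)
  calc ∫ x, ω x * ⟪f x, g x⟫_ℝ ∂μ ≤ ‖∫ x, ω x * ⟪f x, g x⟫_ℝ ∂μ‖ := le_abs_self _
    _ ≤ ∫ x, √(ω x * ‖f x‖ ^ 2) * √(ω x * ‖g x‖ ^ 2) ∂μ :=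
        norm_integral_le_of_norm_le hint pointwise
    _ ≤ _ := integral_sqrt_mul_sqrt_le (nonneg f) (nonneg g) hf hg

end CauchySchwarz

lemma intervalIntegrable_mul_inner {E : Type*} [NormedAddCommGroup E] [InnerProductSpace ℝ E]
    {a b : ℝ} {ω : ℝ → ℝ} {f g : ℝ → E} (hω : IntervalIntegrable ω volume a b)
    (hf : Continuous f) (hg : Continuous g) :
    IntervalIntegrable (fun x => ω x * ⟪f x, g x⟫_ℝ) volume a b :=
  hω.mul_continuousOn (hf.inner hg).continuousOn

lemma intervalIntegrable_mul_norm_sq {E : Type*} [SeminormedAddGroup E]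
    {a b : ℝ} {ω : ℝ → ℝ} {f : ℝ → E} (hω : IntervalIntegrable ω volume a b) (hf : Continuous f) :
    IntervalIntegrable (fun x => ω x * ‖f x‖ ^ 2) volume a b :=
  hω.mul_continuousOn (hf.norm.pow 2).continuousOn

lemma intervalIntegral_sum_mul_inner_le {ι E : Type*} [Fintype ι] [NormedAddCommGroup E]
    [InnerProductSpace ℝ E] {a b : ℝ} {ω : ι → ℝ → ℝ} {f g : ι → ℝ → E} (hab : a ≤ b)
    (hω₀ : ∀ i, ∀ x ∈ Icc a b, 0 ≤ ω i x) (hω : ∀ i, IntervalIntegrable (ω i) volume a b)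
    (hf : ∀ i, Continuous (f i)) (hg : ∀ i, Continuous (g i)) :
    ∫ x in a..b, ∑ i, ω i x * ⟪f i x, g i x⟫_ℝ
      ≤ √(∑ i, ∫ x in a..b, ω i x * ‖f i x‖ ^ 2) * √(∑ i, ∫ x in a..b, ω i x * ‖g i x‖ ^ 2) := by
  have nonneg (h : ι → ℝ → E) (i : ι) : 0 ≤ ∫ x in a..b, ω i x * ‖h i x‖ ^ 2 :=
    intervalIntegral.integral_nonneg hab fun x hx => mul_nonneg (hω₀ i x hx) (sq_nonneg _)
  have cauchySchwarz (i : ι) : ∫ x in a..b, ω i x * ⟪f i x, g i x⟫_ℝ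
      ≤ √(∫ x in a..b, ω i x * ‖f i x‖ ^ 2) * √(∫ x in a..b, ω i x * ‖g i x‖ ^ 2) := by
    have hω₀' : 0 ≤ᵐ[volume.restrict (Ioc a b)] ω i := by
      filter_upwards [ae_restrict_mem measurableSet_Ioc] with x hx
        using hω₀ i x (Ioc_subset_Icc_self hx)
    simp only [integral_of_le hab]
    exact integral_mul_inner_le hω₀' (intervalIntegrable_mul_norm_sq (hω i) (hf i)).1
      (intervalIntegrable_mul_norm_sq (hω i) (hg i)).1
  rw [intervalIntegral.integral_finsetSum fun i _ =>
    intervalIntegrable_mul_inner (hω i) (hf i) (hg i)]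
  exact (Finset.sum_le_sum fun i _ => cauchySchwarz i).trans
    (Real.sum_sqrt_mul_sqrt_le _ (nonneg f) (nonneg g))

lemma integral_eq_sub_of_ae_hasDerivAt {f f' : ℝ → ℝ} {a b : ℝ}
    (hf : AbsolutelyContinuousOnInterval f a b)
    (hderiv : ∀ᵐ x, x ∈ uIoo a b → HasDerivAt f (f' x) x) :
    ∫ x in a..b, f' x = f b - f a := by
  rw [← hf.integral_deriv_eq_sub]
  refine integral_congr_ae ?_
  filter_upwards [hderiv, volume.ae_ne (a ⊔ b)] with x hx hne hmem
  exact (hx ⟨hmem.1, hmem.2.lt_of_ne hne⟩).deriv.symm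

lemma exists_pos_forall_le_mul_of_isCompact {α : Type*} [TopologicalSpace α] {s : Set α}
    {f g : α → ℝ} (hs : IsCompact s) (hf : ContinuousOn f s) (hg : ContinuousOn g s)
    (hg₀ : ∀ x ∈ s, 0 < g x) : ∃ C > 0, ∀ x ∈ s, f x ≤ C * g x := by
  obtain ⟨M, hM⟩ := hs.bddAbove_image (hf.div hg fun x hx => (hg₀ x hx).ne')
  refine ⟨M ⊔ 1, lt_sup_of_lt_right one_pos, fun x hx => (div_le_iff₀ (hg₀ x hx)).1 ?_⟩
  exact (hM (mem_image_of_mem _ hx)).trans le_sup_left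

lemma real_inner_ofReal_mul_left (r : ℝ) (z w : ℂ) : ⟪(r : ℂ) * z, w⟫_ℝ = r * ⟪z, w⟫_ℝ := by
  rw [← Complex.real_smul, real_inner_smul_left]

lemma real_inner_I_mul_ofReal_mul_self (r : ℝ) (z : ℂ) : ⟪I * (r * z), z⟫_ℝ = 0 := by
  have skew : ⟪z, I * z⟫_ℝ = 0 := real_inner_I_smul_self ℂ z
  rw [mul_left_comm, real_inner_ofReal_mul_left, real_inner_comm, skew, mul_zero]

/-- The density of `Re ⟨F, U⟩` for the phase-space inner product of `F = (f₁, f₂, f₃, f₄)` and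
`U = (u, w, θ, q)`, of which `normFsq` and `normUsq` are the diagonal: the power supplied to the
system by the data. -/
def powerDensity (τ : ℝ) (m p : ℝ → ℝ) (f₁ f₂ f₃ f₄ u w θ q : ℝ → ℂ) (x : ℝ) : ℝ :=
  p x * ⟪deriv f₁ x, deriv u x⟫_ℝ + m x * ⟪f₂ x, w x⟫_ℝ + ⟪f₃ x, θ x⟫_ℝ + τ * ⟪f₄ x, q x⟫_ℝ

/-- The density of the energy dissipated by the viscous damping `δ` and the heat flux. -/
def dissipationDensity (β : ℝ) (δ : ℝ → ℝ) (w q : ℝ → ℂ) (x : ℝ) : ℝ :=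
  2 * δ x * ‖deriv w x‖ ^ 2 + β * ‖q x‖ ^ 2

/-- The total stress of the rod: the elastic part `p u'` plus the viscous part `2 δ w'`. -/
def stress (δ p : ℝ → ℝ) (u w : ℝ → ℂ) (x : ℝ) : ℂ :=
  (p x : ℂ) * deriv u x + 2 * (δ x : ℂ) * deriv w x

/-- The primitive of the energy balance: for a solution of the resolvent system its derivative is
the dissipation density minus the power density. -/
def energyFlux (η κ : ℝ) (δ p : ℝ → ℝ) (u w θ q : ℝ → ℂ) (x : ℝ) : ℝ :=
  ⟪stress δ p u w x, w x⟫_ℝ - η * ⟪θ x, w x⟫_ℝ - κ * ⟪q x, θ x⟫_ℝ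

lemma inner_stress (δ p : ℝ → ℝ) (u w : ℝ → ℂ) (x : ℝ) (z : ℂ) :
    ⟪stress δ p u w x, z⟫_ℝ = p x * ⟪deriv u x, z⟫_ℝ + 2 * δ x * ⟪deriv w x, z⟫_ℝ := by
  rw [stress, inner_add_left, real_inner_ofReal_mul_left, ← ofReal_ofNat, ← ofReal_mul,
    real_inner_ofReal_mul_left]

lemma absolutelyContinuousOnInterval_energyFlux {η κ a b : ℝ} {δ p : ℝ → ℝ} {u w θ q : ℝ → ℂ}
    (hδ : AbsolutelyContinuousOnInterval δ a b) (hp : AbsolutelyContinuousOnInterval p a b)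
    (hu : ContDiff ℝ 2 u) (hw : ContDiff ℝ 2 w) (hθ : ContDiff ℝ 1 θ) (hq : ContDiff ℝ 1 q) :
    AbsolutelyContinuousOnInterval (energyFlux η κ δ p u w θ q) a b := by
  have inner_ac {f g : ℝ → ℂ} (hf : ContDiff ℝ 1 f) (hg : ContDiff ℝ 1 g) :
      AbsolutelyContinuousOnInterval (fun x => ⟪f x, g x⟫_ℝ) a b :=
    (hf.inner ℝ hg).contDiffOn.absolutelyContinuousOnInterval
  have hw₁ : ContDiff ℝ 1 w := hw.of_le one_le_two
  have hflux := (((hp.fun_mul (inner_ac (hu.deriv' (n := 1)) hw₁)).fun_add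
    ((hδ.const_mul 2).fun_mul (inner_ac (hw.deriv' (n := 1)) hw₁))).fun_sub
      ((inner_ac hθ hw₁).const_mul η)).fun_sub ((inner_ac hq hθ).const_mul κ)
  simp only [← inner_stress] at hflux
  exact hflux

lemma integral_powerDensity_le {L τ : ℝ} {m p : ℝ → ℝ} {f₁ f₂ f₃ f₄ u w θ q : ℝ → ℂ}
    (hL : 0 ≤ L) (hτ : 0 ≤ τ) (hm₀ : ∀ x ∈ Icc 0 L, 0 ≤ m x) (hp₀ : ∀ x ∈ Icc 0 L, 0 ≤ p x)
    (hm : IntervalIntegrable m volume 0 L) (hp : IntervalIntegrable p volume 0 L)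
    (hf₁ : Continuous (deriv f₁)) (hf₂ : Continuous f₂) (hf₃ : Continuous f₃)
    (hf₄ : Continuous f₄) (hu : Continuous (deriv u)) (hw : Continuous w) (hθ : Continuous θ)
    (hq : Continuous q) :
    ∫ x in (0 : ℝ)..L, powerDensity τ m p f₁ f₂ f₃ f₄ u w θ q x
      ≤ √(normFsq L τ m p f₁ f₂ f₃ f₄) * √(normUsq L τ m p u w θ q) := by
  have h := intervalIntegral_sum_mul_inner_le (ω := ![p, m, fun _ => 1, fun _ => τ])
    (f := ![deriv f₁, f₂, f₃, f₄]) (g := ![deriv u, w, θ, q]) hL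
    (fun i => by fin_cases i; exacts [hp₀, hm₀, fun _ _ => zero_le_one, fun _ _ => hτ])
    (by simp [Fin.forall_fin_succ, *]) (by simp [Fin.forall_fin_succ, *])
    (by simp [Fin.forall_fin_succ, *])
  simpa [Fin.sum_univ_four, powerDensity, normFsq, normUsq] using h

lemma intervalIntegrable_powerDensity {a b τ : ℝ} {m p : ℝ → ℝ} {f₁ f₂ f₃ f₄ u w θ q : ℝ → ℂ}
    (hm : IntervalIntegrable m volume a b) (hp : IntervalIntegrable p volume a b)
    (hf₁ : Continuous (deriv f₁)) (hf₂ : Continuous f₂) (hf₃ : Continuous f₃)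
    (hf₄ : Continuous f₄) (hu : Continuous (deriv u)) (hw : Continuous w) (hθ : Continuous θ)
    (hq : Continuous q) :
    IntervalIntegrable (powerDensity τ m p f₁ f₂ f₃ f₄ u w θ q) volume a b :=
  (((intervalIntegrable_mul_inner hp hf₁ hu).add (intervalIntegrable_mul_inner hm hf₂ hw)).add
    ((hf₃.inner hθ).intervalIntegrable a b)).add
      (((hf₄.inner hq).intervalIntegrable a b).const_mul τ)

lemma intervalIntegrable_dissipationDensity {a b β : ℝ} {δ : ℝ → ℝ} {w q : ℝ → ℂ}
    (hδ : IntervalIntegrable δ volume a b) (hw : Continuous (deriv w)) (hq : Continuous q) :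
    IntervalIntegrable (dissipationDensity β δ w q) volume a b :=
  (intervalIntegrable_mul_norm_sq (hδ.const_mul 2) hw).add
    (intervalIntegrable_mul_norm_sq intervalIntegrable_const hq)

lemma integral_add_le_mul_integral_dissipationDensity {L β τ C : ℝ} {m δ : ℝ → ℝ} {w q : ℝ → ℂ}
    (hL : 0 ≤ L) (hm : IntervalIntegrable m volume 0 L) (hδ : IntervalIntegrable δ volume 0 L)
    (hw : Continuous (deriv w)) (hq : Continuous q)
    (hmδ : ∀ x ∈ Icc 0 L, m x ≤ C * (2 * δ x)) (hτβ : τ ≤ C * β) :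
    (∫ x in (0 : ℝ)..L, m x * ‖deriv w x‖ ^ 2) + τ * (∫ x in (0 : ℝ)..L, ‖q x‖ ^ 2)
      ≤ C * ∫ x in (0 : ℝ)..L, dissipationDensity β δ w q x := by
  have hmw := intervalIntegrable_mul_norm_sq hm hw
  have hτq : IntervalIntegrable (fun x => τ * ‖q x‖ ^ 2) volume 0 L :=
    intervalIntegrable_mul_norm_sq intervalIntegrable_const hq
  rw [← intervalIntegral.integral_const_mul, ← intervalIntegral.integral_const_mul,
    ← intervalIntegral.integral_add hmw hτq]
  refine integral_mono_on hL (hmw.add hτq)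
    ((intervalIntegrable_dissipationDensity hδ hw hq).const_mul C) fun x hx => ?_
  calc m x * ‖deriv w x‖ ^ 2 + τ * ‖q x‖ ^ 2
      ≤ C * (2 * δ x) * ‖deriv w x‖ ^ 2 + C * β * ‖q x‖ ^ 2 := by gcongr; exact hmδ x hx
    _ = C * dissipationDensity β δ w q x := by rw [dissipationDensity]; ring

namespace ResolventSol

variable {L η β κ τ lam : ℝ} {m δ p : ℝ → ℝ} {f₁ f₂ f₃ f₄ u w θ q : ℝ → ℂ} {x : ℝ}

lemma deriv_kinematic (h : ResolventSol L η β κ τ m δ p lam f₁ f₂ f₃ f₄ u w θ q)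
    (hx : x ∈ Ioo 0 L) : I * (lam * deriv u x) - deriv w x = deriv f₁ x := by
  obtain ⟨hu, hw, -, -, -, -, -, -, hsys, -⟩ := h
  have hf₁ : f₁ =ᶠ[nhds x] fun y => I * lam * u y - w y := by
    filter_upwards [isOpen_Ioo.mem_nhds hx] with y hy using (hsys y hy).1.symm
  have hu' := (hu.differentiable (by simp) x).hasDerivAt
  have hw' := (hw.differentiable (by simp) x).hasDerivAt
  rw [hf₁.deriv_eq, ((hu'.const_mul (I * lam)).fun_sub hw').deriv, mul_assoc]

lemma heat_balance (h : ResolventSol L η β κ τ m δ p lam f₁ f₂ f₃ f₄ u w θ q)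
    (hx : x ∈ Ioo 0 L) : I * (lam * θ x) + (κ * deriv q x + η * deriv w x) = f₃ x := by
  obtain ⟨-, hw, -, hq, -, -, -, -, hsys, -⟩ := h
  have hw' := (hw.differentiable (by simp) x).hasDerivAt
  have hq' := (hq.differentiable (by simp) x).hasDerivAt
  rw [← (hsys x hx).2.2.1, ((hq'.const_mul (κ : ℂ)).fun_add (hw'.const_mul (η : ℂ))).deriv,
    mul_assoc]

lemma energy_balance (h : ResolventSol L η β κ τ m δ p lam f₁ f₂ f₃ f₄ u w θ q)
    (hx : x ∈ Ioo 0 L) :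
    (⟪stress δ p u w x, deriv w x⟫_ℝ + ⟪deriv (stress δ p u w) x, w x⟫_ℝ)
        - η * (⟪θ x, deriv w x⟫_ℝ + ⟪deriv θ x, w x⟫_ℝ)
        - κ * (⟪q x, deriv θ x⟫_ℝ + ⟪deriv q x, θ x⟫_ℝ)
      = dissipationDensity β δ w q x - powerDensity τ m p f₁ f₂ f₃ f₄ u w θ q x := by
  have power_kinematic : ⟪deriv f₁ x, deriv u x⟫_ℝ = -⟪deriv u x, deriv w x⟫_ℝ := by
    rw [← h.deriv_kinematic hx, inner_sub_left, real_inner_I_mul_ofReal_mul_self, zero_sub,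
      real_inner_comm]
  have power_heat : ⟪f₃ x, θ x⟫_ℝ = κ * ⟪deriv q x, θ x⟫_ℝ + η * ⟪θ x, deriv w x⟫_ℝ := by
    rw [← h.heat_balance hx, inner_add_left, inner_add_left, real_inner_I_mul_ofReal_mul_self,
      real_inner_ofReal_mul_left, real_inner_ofReal_mul_left, zero_add,
      real_inner_comm (θ x) (deriv w x)]
  obtain ⟨-, -, -, -, -, -, -, -, hsys, -⟩ := h
  obtain ⟨-, momentum, -, heat_flux⟩ := hsys x hx
  have power_momentum :
      m x * ⟪f₂ x, w x⟫_ℝ = η * ⟪deriv θ x, w x⟫_ℝ - ⟪deriv (stress δ p u w) x, w x⟫_ℝ := by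
    have skew := real_inner_I_mul_ofReal_mul_self (lam * m x) (w x)
    rw [ofReal_mul, mul_assoc, ← mul_assoc, ← mul_assoc] at skew
    rw [← real_inner_ofReal_mul_left, ← momentum, inner_add_left, inner_sub_left, skew,
      real_inner_ofReal_mul_left, zero_sub, neg_add_eq_sub]
    rfl
  have power_heat_flux : τ * ⟪f₄ x, q x⟫_ℝ = κ * ⟪q x, deriv θ x⟫_ℝ + β * ‖q x‖ ^ 2 := by
    have skew := real_inner_I_mul_ofReal_mul_self (lam * τ) (q x)
    rw [ofReal_mul, mul_assoc, ← mul_assoc, ← mul_assoc] at skew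
    rw [← real_inner_ofReal_mul_left, ← heat_flux, inner_add_left, inner_add_left, skew,
      real_inner_ofReal_mul_left, real_inner_ofReal_mul_left, real_inner_self_eq_norm_sq,
      zero_add, real_inner_comm]
  rw [dissipationDensity, powerDensity, power_kinematic, power_momentum, power_heat,
    power_heat_flux, inner_stress, real_inner_self_eq_norm_sq]
  ring

lemma hasDerivAt_energyFlux (h : ResolventSol L η β κ τ m δ p lam f₁ f₂ f₃ f₄ u w θ q)
    (hx : x ∈ Ioo 0 L) (hδ : DifferentiableAt ℝ δ x) (hp : DifferentiableAt ℝ p x) :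
    HasDerivAt (energyFlux η κ δ p u w θ q)
      (dissipationDensity β δ w q x - powerDensity τ m p f₁ f₂ f₃ f₄ u w θ q x) x := by
  rw [← h.energy_balance hx]
  obtain ⟨hu, hw, hθ, hq, -⟩ := h
  have differentiableAt_deriv {g : ℝ → ℂ} (hg : ContDiff ℝ (⊤ : ℕ∞) g) :
      DifferentiableAt ℝ (deriv g) x :=
    (contDiff_infty_iff_deriv.1 hg).2.differentiable (by simp) x
  have hasDerivAt {g : ℝ → ℂ} (hg : ContDiff ℝ (⊤ : ℕ∞) g) : HasDerivAt g (deriv g x) x :=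
    (hg.differentiable (by simp) x).hasDerivAt
  have hδ' := hδ.hasDerivAt.ofReal_comp.differentiableAt
  have hp' := hp.hasDerivAt.ofReal_comp.differentiableAt
  have hstress : DifferentiableAt ℝ (stress δ p u w) x :=
    (hp'.mul (differentiableAt_deriv hu)).add
      ((hδ'.const_mul 2).mul (differentiableAt_deriv hw))
  exact ((hstress.hasDerivAt.inner ℝ (hasDerivAt hw)).sub
    (((hasDerivAt hθ).inner ℝ (hasDerivAt hw)).const_mul η)).sub
      (((hasDerivAt hq).inner ℝ (hasDerivAt hθ)).const_mul κ)

theorem integral_dissipationDensity_eq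
    (h : ResolventSol L η β κ τ m δ p lam f₁ f₂ f₃ f₄ u w θ q) (hL : 0 ≤ L)
    (hm : IntervalIntegrable m volume 0 L) (hδ : AbsolutelyContinuousOnInterval δ 0 L)
    (hp : AbsolutelyContinuousOnInterval p 0 L) :
    ∫ x in (0 : ℝ)..L, dissipationDensity β δ w q x
      = ∫ x in (0 : ℝ)..L, powerDensity τ m p f₁ f₂ f₃ f₄ u w θ q x := by
  have balance : ∀ᵐ x, x ∈ uIoo 0 L → HasDerivAt (energyFlux η κ δ p u w θ q)
      (dissipationDensity β δ w q x - powerDensity τ m p f₁ f₂ f₃ f₄ u w θ q x) x := by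
    filter_upwards [hδ.ae_differentiableAt, hp.ae_differentiableAt] with x hδx hpx hx
    have hx' := uIoo_subset_uIcc_self hx
    exact h.hasDerivAt_energyFlux (uIoo_of_le hL ▸ hx) (hδx hx') (hpx hx')
  obtain ⟨hu, hw, hθ, hq, hf₁, hf₂, hf₃, hf₄, -, -, -, hw₀, hwL, hq₀, hqL⟩ := h
  have hflux : AbsolutelyContinuousOnInterval (energyFlux η κ δ p u w θ q) 0 L :=
    absolutelyContinuousOnInterval_energyFlux hδ hp (contDiff_infty.1 hu 2) (contDiff_infty.1 hw 2)
      (contDiff_infty.1 hθ 1) (contDiff_infty.1 hq 1)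
  have continuous_deriv {g : ℝ → ℂ} (hg : ContDiff ℝ (⊤ : ℕ∞) g) : Continuous (deriv g) :=
    hg.continuous_deriv (by simp)
  rw [← sub_eq_zero, ← intervalIntegral.integral_sub
      (intervalIntegrable_dissipationDensity hδ.continuousOn.intervalIntegrable
        (continuous_deriv hw) hq.continuous)
      (intervalIntegrable_powerDensity hm hp.continuousOn.intervalIntegrable
        (continuous_deriv hf₁) hf₂.continuous hf₃.continuous hf₄.continuous
        (continuous_deriv hu) hw.continuous hθ.continuous hq.continuous),
    integral_eq_sub_of_ae_hasDerivAt hflux balance]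
  simp [energyFlux, hw₀, hwL, hq₀, hqL]

theorem integral_add_le_mul_sqrt_mul_sqrt {C : ℝ}
    (h : ResolventSol L η β κ τ m δ p lam f₁ f₂ f₃ f₄ u w θ q)
    (hL : 0 ≤ L) (hτ : 0 ≤ τ) (hC : 0 ≤ C)
    (hm : IntervalIntegrable m volume 0 L) (hδ : AbsolutelyContinuousOnInterval δ 0 L)
    (hp : AbsolutelyContinuousOnInterval p 0 L)
    (hm₀ : ∀ x ∈ Icc 0 L, 0 ≤ m x) (hp₀ : ∀ x ∈ Icc 0 L, 0 ≤ p x)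
    (hmδ : ∀ x ∈ Icc 0 L, m x ≤ C * (2 * δ x)) (hτβ : τ ≤ C * β) :
    (∫ x in (0 : ℝ)..L, m x * ‖deriv w x‖ ^ 2) + τ * (∫ x in (0 : ℝ)..L, ‖q x‖ ^ 2)
      ≤ C * √(normFsq L τ m p f₁ f₂ f₃ f₄) * √(normUsq L τ m p u w θ q) := by
  have balance := h.integral_dissipationDensity_eq hL hm hδ hp
  obtain ⟨hu, hw, hθ, hq, hf₁, hf₂, hf₃, hf₄, -⟩ := h
  have continuous_deriv {g : ℝ → ℂ} (hg : ContDiff ℝ (⊤ : ℕ∞) g) : Continuous (deriv g) :=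
    hg.continuous_deriv (by simp)
  calc (∫ x in (0 : ℝ)..L, m x * ‖deriv w x‖ ^ 2) + τ * (∫ x in (0 : ℝ)..L, ‖q x‖ ^ 2)
      ≤ C * ∫ x in (0 : ℝ)..L, dissipationDensity β δ w q x :=
        integral_add_le_mul_integral_dissipationDensity hL hm hδ.continuousOn.intervalIntegrable
          (continuous_deriv hw) hq.continuous hmδ hτβ
    _ = C * ∫ x in (0 : ℝ)..L, powerDensity τ m p f₁ f₂ f₃ f₄ u w θ q x := by rw [balance]
    _ ≤ C * (√(normFsq L τ m p f₁ f₂ f₃ f₄) * √(normUsq L τ m p u w θ q)) := by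
        gcongr
        exact integral_powerDensity_le hL hτ hm₀ hp₀ hm hp.continuousOn.intervalIntegrable
          (continuous_deriv hf₁) hf₂.continuous hf₃.continuous hf₄.continuous
          (continuous_deriv hu) hw.continuous hθ.continuous hq.continuous
    _ = C * √(normFsq L τ m p f₁ f₂ f₃ f₄) * √(normUsq L τ m p u w θ q) := (mul_assoc ..).symm

end ResolventSol

theorem resolvent_estimate_w_q_general {L η β κ τ : ℝ} {m δ p : ℝ → ℝ}
    (hL : 0 ≤ L) (hβ : 0 < β) (hτ : 0 ≤ τ)
    (hm : IntervalIntegrable m volume 0 L) (hδ : AbsolutelyContinuousOnInterval δ 0 L)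
    (hp : AbsolutelyContinuousOnInterval p 0 L)
    (hm₀ : ∀ x ∈ Icc 0 L, 0 ≤ m x) (hp₀ : ∀ x ∈ Icc 0 L, 0 ≤ p x)
    (hmδ : ∃ K > 0, ∀ x ∈ Icc 0 L, m x ≤ K * δ x) :
    ∃ C > (0 : ℝ), ∀ (lam : ℝ) (f₁ f₂ f₃ f₄ u w θ q : ℝ → ℂ),
      ResolventSol L η β κ τ m δ p lam f₁ f₂ f₃ f₄ u w θ q →
        (∫ x in (0 : ℝ)..L, m x * ‖deriv w x‖ ^ 2) + τ * (∫ x in (0 : ℝ)..L, ‖q x‖ ^ 2)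
          ≤ C * √(normFsq L τ m p f₁ f₂ f₃ f₄) * √(normUsq L τ m p u w θ q) := by
  obtain ⟨K, hK, hmK⟩ := hmδ
  have hτβ : τ ≤ (K + τ / β) * β := by
    rw [add_mul, div_mul_cancel₀ _ hβ.ne']
    exact le_add_of_nonneg_left (by positivity)
  have hmδ : ∀ x ∈ Icc 0 L, m x ≤ (K + τ / β) * (2 * δ x) := fun x hx => by
    have hδ₀ : 0 ≤ δ x := nonneg_of_mul_nonneg_right ((hm₀ x hx).trans (hmK x hx)) hK
    calc m x ≤ K * δ x := hmK x hx
      _ ≤ (K + τ / β) * (2 * δ x) := by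
        gcongr
        · exact le_add_of_nonneg_right (by positivity)
        · linarith
  exact ⟨K + τ / β, by positivity, fun _ _ _ _ _ _ _ _ _ h =>
    h.integral_add_le_mul_sqrt_mul_sqrt hL hτ (by positivity) hm hδ hp hm₀ hp₀ hmδ hτβ⟩

theorem resolvent_estimate_w_q
    (L η β κ τ : ℝ) (hL : 0 < L) (hη : 0 < η) (hβ : 0 < β) (hκ : 0 < κ) (hτ : 0 < τ)
    (m δ p : ℝ → ℝ)
    (hmLip : ∃ K, LipschitzOnWith K m (Icc 0 L))
    (hδLip : ∃ K, LipschitzOnWith K δ (Icc 0 L))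
    (hpLip : ∃ K, LipschitzOnWith K p (Icc 0 L))
    (hmpos : ∀ x ∈ Icc (0 : ℝ) L, 0 < m x)
    (hδpos : ∀ x ∈ Icc (0 : ℝ) L, 0 < δ x)
    (hppos : ∀ x ∈ Icc (0 : ℝ) L, 0 < p x)
    :
    ∃ C > (0 : ℝ),
      ∀ (lam : ℝ) (f₁ f₂ f₃ f₄ u w θ q : ℝ → ℂ),
        ResolventSol L η β κ τ m δ p lam f₁ f₂ f₃ f₄ u w θ q →
          (∫ x in (0 : ℝ)..L, m x * ‖deriv w x‖ ^ 2)
            + τ * (∫ x in (0 : ℝ)..L, ‖q x‖ ^ 2)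
            ≤ C * Real.sqrt (normFsq L τ m p f₁ f₂ f₃ f₄)
              * Real.sqrt (normUsq L τ m p u w θ q) := by
  have hKδ := hmLip.elim fun _ hm => hδLip.elim fun _ hδ =>
    exists_pos_forall_le_mul_of_isCompact isCompact_Icc hm.continuousOn hδ.continuousOn hδpos
  rw [← uIcc_of_le hL.le] at hmLip hδLip hpLip
  obtain ⟨⟨_, hm⟩, ⟨_, hδ⟩, ⟨_, hp⟩⟩ := And.intro hmLip (And.intro hδLip hpLip)
  exact resolvent_estimate_w_q_general hL.le hβ hτ.le hm.continuousOn.intervalIntegrable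
    hδ.absolutelyContinuousOnInterval hp.absolutelyContinuousOnInterval
    (fun x hx => (hmpos x hx).le) (fun x hx => (hppos x hx).le) hKδ
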